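/- Let ℋ = ℋ_j ⊗ ℋ_i be a tensor product of two finite-dimensional complex Hilbert spaces, and let X, Y be operators on ℋ such that the partial trace of Y over the factor ℋ_i vanishes and X = X_j ⊗ I_i for some operator X_j on ℋ_j. Then for every real p ≥ 2, ‖X‖_p ≤ ‖X + Y‖_p. -/

import Mathlib

open scoped Kronecker Matrix

/-- The Schatten `p`-norm `‖A‖_p = (Tr((AᴴA)^{p/2}))^{1/p}`, expressed through the
eigenvalues of `AᴴA` (the squared singular values of `A`). -/
noncomputable def schattenNorm {n : Type*} [Fintype n] [DecidableEq n] (p : ℝ)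
    (A : Matrix n n ℂ) : ℝ :=
  (∑ i, ((Matrix.isHermitian_conjTranspose_mul_self A).eigenvalues i) ^ (p / 2)) ^ (1 / p)

/-- The partial trace of an operator on `ℋ_j ⊗ ℋ_i` over the factor `ℋ_i`. -/
noncomputable def ptraceRight {J I : Type*} [Fintype I]
    (Y : Matrix (J × I) (J × I) ℂ) : Matrix J J ℂ :=
  Matrix.of fun a b => ∑ i : I, Y (a, i) (b, i)

theorem tangent_rpow {b c q : ℝ} (hb : 0 ≤ b) (hc : 0 ≤ c) (hq : 1 ≤ q) :
    c ^ q + q * c ^ (q - 1) * (b - c) ≤ b ^ q := by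
  rcases hc.eq_or_lt with rfl | hc
  · rcases hq.eq_or_lt with rfl | hq
    · simp
    · rw [Real.zero_rpow (by linarith), Real.zero_rpow (by linarith)]
      simpa using Real.rpow_nonneg hb q
  · have h := one_add_mul_self_le_rpow_one_add (s := b / c - 1)
      (by have := div_nonneg hb hc.le; linarith) hq
    have e : 1 + (b / c - 1) = b / c := by ring
    rw [e, Real.div_rpow hb hc.le, le_div_iff₀ (Real.rpow_pos_of_pos hc q)] at h
    have e2 : c ^ (q - 1) = c ^ q / c := by rw [Real.rpow_sub hc, Real.rpow_one]
    rw [e2]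
    refine le_trans (le_of_eq ?_) h
    field_simp

theorem conj_diag_entry {n : Type*} [Fintype n] [DecidableEq n] (M : Matrix n n ℂ)
    (b : n → ℝ) (k : n) :
    (Mᴴ * Matrix.diagonal (fun i => (b i : ℂ)) * M) k k
      = ((∑ i, Complex.normSq (M i k) * b i : ℝ) : ℂ) := by
  rw [Matrix.mul_apply]
  push_cast
  refine Finset.sum_congr rfl fun i _ => ?_
  rw [Matrix.mul_diagonal, Matrix.conjTranspose_apply, Complex.normSq_eq_conj_mul_self,
    starRingEnd_apply]
  ring

theorem klein_rpow {n : Type*} [Fintype n] [DecidableEq n] (U V B : Matrix n n ℂ)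
    (hU : U * Uᴴ = 1) (hV : V * Vᴴ = 1) (b c : n → ℝ)
    (hB : B = U * Matrix.diagonal (fun i => (b i : ℂ)) * Uᴴ)
    (hb : ∀ i, 0 ≤ b i) (hc : ∀ i, 0 ≤ c i) {q : ℝ} (hq : 1 ≤ q) :
    ∑ k, c k ^ q + ∑ k, q * c k ^ (q - 1) * (((Vᴴ * B * V) k k).re - c k)
      ≤ ∑ i, b i ^ q := by
  have hU' : Uᴴ * U = 1 := mul_eq_one_comm.mp hU
  have hV' : Vᴴ * V = 1 := mul_eq_one_comm.mp hV
  set M := Uᴴ * V with hM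
  have hMH : Mᴴ = Vᴴ * U := by simp [hM]
  have h1 : Mᴴ * M = 1 := by
    rw [hMH, hM, Matrix.mul_assoc, ← Matrix.mul_assoc U, hU, Matrix.one_mul, hV']
  have h2 : M * Mᴴ = 1 := mul_eq_one_comm.mp h1
  have col : ∀ k, ∑ i, Complex.normSq (M i k) = 1 := by
    intro k
    have h := conj_diag_entry M (fun _ => 1) k
    simp only [Complex.ofReal_one, Matrix.diagonal_one, Matrix.mul_one, h1, mul_one,
      Matrix.one_apply_eq] at h
    exact_mod_cast h.symm
  have row : ∀ i, ∑ k, Complex.normSq (M i k) = 1 := by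
    intro i
    have h := conj_diag_entry Mᴴ (fun _ => 1) i
    simp only [Complex.ofReal_one, Matrix.diagonal_one, Matrix.mul_one, h2, mul_one,
      Matrix.one_apply_eq, Matrix.conjTranspose_conjTranspose, Matrix.conjTranspose_apply,
      Complex.star_def, Complex.normSq_conj] at h
    exact_mod_cast h.symm
  have beta : ∀ k, ((Vᴴ * B * V) k k).re = ∑ i, Complex.normSq (M i k) * b i := by
    intro k
    have e : Vᴴ * B * V = Mᴴ * Matrix.diagonal (fun i => (b i : ℂ)) * M := by
      rw [hMH, hM, hB]; simp only [Matrix.mul_assoc]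
    rw [e, conj_diag_entry, Complex.ofReal_re]
  calc _ = ∑ k, ∑ i, Complex.normSq (M i k) *
            (c k ^ q + q * c k ^ (q - 1) * (b i - c k)) := by
        rw [← Finset.sum_add_distrib]
        refine Finset.sum_congr rfl fun k _ => ?_
        rw [beta]
        have : ∀ i, Complex.normSq (M i k) * (c k ^ q + q * c k ^ (q - 1) * (b i - c k))
          = Complex.normSq (M i k) * (c k ^ q - q * c k ^ (q - 1) * c k)
            + q * c k ^ (q - 1) * (Complex.normSq (M i k) * b i) := fun i => by ring
        simp only [this, Finset.sum_add_distrib, ← Finset.sum_mul, ← Finset.mul_sum, col]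
        ring
    _ ≤ ∑ k, ∑ i, Complex.normSq (M i k) * b i ^ q :=
        Finset.sum_le_sum fun k _ => Finset.sum_le_sum fun i _ =>
          mul_le_mul_of_nonneg_left (tangent_rpow (hb i) (hc k) hq) (Complex.normSq_nonneg _)
    _ = _ := by
        rw [Finset.sum_comm]
        simp only [← Finset.sum_mul, row, one_mul]

theorem ptrace_sum {J I : Type*} [Fintype J] [Fintype I] [DecidableEq J] [DecidableEq I]
    (P Q : Matrix J J ℂ) (Z : Matrix (J × I) (J × I) ℂ) (hZ : ptraceRight Z = 0) (a : J) :
    ∑ i, ((P ⊗ₖ (1 : Matrix I I ℂ)) * Z * (Q ⊗ₖ (1 : Matrix I I ℂ))) (a, i) (a, i) = 0 := by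
  have h : ∀ x y, ∑ i, Z (x, i) (y, i) = 0 := fun x y => congrFun (congrFun hZ x) y
  simp only [Matrix.mul_apply, Matrix.kroneckerMap_apply, Fintype.sum_prod_type,
    Matrix.one_apply, mul_ite, ite_mul, mul_one, mul_zero, zero_mul, Finset.sum_ite_eq,
    Finset.sum_ite_eq', Finset.mem_univ, if_true]
  rw [Finset.sum_comm]
  refine Finset.sum_eq_zero fun y _ => ?_
  rw [← Finset.sum_mul, Finset.sum_comm]
  simp only [← Finset.mul_sum, h, mul_zero, Finset.sum_const_zero, zero_mul]

theorem spec_form {n : Type*} [Fintype n] [DecidableEq n] {A : Matrix n n ℂ}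
    (hA : A.IsHermitian) : ∃ U : Matrix n n ℂ, U * Uᴴ = 1 ∧
      A = U * Matrix.diagonal (fun i => (hA.eigenvalues i : ℂ)) * Uᴴ := by
  refine ⟨hA.eigenvectorUnitary, ?_, ?_⟩
  · have := (Matrix.mem_unitaryGroup_iff).mp hA.eigenvectorUnitary.2
    simpa [Matrix.star_eq_conjTranspose] using this
  · have := hA.spectral_theorem
    simpa [Unitary.conjStarAlgAut_apply, Matrix.star_eq_conjTranspose, Function.comp_def] using this

theorem diag_conj_re_nonneg {n : Type*} [Fintype n] [DecidableEq n] (Y V : Matrix n n ℂ)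
    (k : n) : 0 ≤ ((Vᴴ * (Yᴴ * Y) * V) k k).re := by
  have e : Vᴴ * (Yᴴ * Y) * V = (Y * V)ᴴ * (Y * V) := by
    simp [Matrix.mul_assoc]
  rw [e, Matrix.mul_apply, Complex.re_sum]
  refine Finset.sum_nonneg fun i _ => ?_
  rw [Matrix.conjTranspose_apply, ← starRingEnd_apply, ← Complex.normSq_eq_conj_mul_self,
    Complex.ofReal_re]
  exact Complex.normSq_nonneg _

open scoped ComplexOrder in
theorem eig_nonneg {n : Type*} [Fintype n] [DecidableEq n] (A : Matrix n n ℂ) (k : n) :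
    0 ≤ (Matrix.isHermitian_conjTranspose_mul_self A).eigenvalues k :=
  (Matrix.posSemidef_conjTranspose_mul_self A).eigenvalues_nonneg k

/-- If `Tr_i(Y) = 0` and `X = X_j ⊗ I_i`, then for `p ≥ 2`, `‖X‖_p ≤ ‖X + Y‖_p`. -/
theorem schatten_le_of_traceless_perturbation
    {J I : Type*} [Fintype J] [Fintype I] [DecidableEq J] [DecidableEq I]
    (X Y : Matrix (J × I) (J × I) ℂ)
    (Xj : Matrix J J ℂ) (hX : X = Xj ⊗ₖ (1 : Matrix I I ℂ))
    (hY : ptraceRight Y = 0)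
    (p : ℝ) (hp : 2 ≤ p) :
    schattenNorm p X ≤ schattenNorm p (X + Y) := by
  have hq : 1 ≤ p / 2 := by linarith
  set q := p / 2 with hqdef
  unfold schattenNorm
  rw [← hqdef]
  have nn : ∀ (Z : Matrix (J × I) (J × I) ℂ) k,
      0 ≤ (Matrix.isHermitian_conjTranspose_mul_self Z).eigenvalues k := fun Z k =>
    eig_nonneg Z k
  refine Real.rpow_le_rpow (Finset.sum_nonneg fun k _ => Real.rpow_nonneg (nn X k) _) ?_
    (by positivity)
  obtain ⟨UA, hUA, hA⟩ := spec_form (Matrix.isHermitian_conjTranspose_mul_self (X + Y))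
  obtain ⟨UX, hUX, hXX⟩ := spec_form (Matrix.isHermitian_conjTranspose_mul_self X)
  obtain ⟨Uj, hUj, hXj⟩ := spec_form (Matrix.isHermitian_conjTranspose_mul_self Xj)
  set d := (Matrix.isHermitian_conjTranspose_mul_self Xj).eigenvalues with hd
  have hd0 : ∀ a, 0 ≤ d a := fun a =>
    eig_nonneg Xj a
  set V : Matrix (J × I) (J × I) ℂ := Uj ⊗ₖ (1 : Matrix I I ℂ) with hVdef
  have hVH : Vᴴ = Ujᴴ ⊗ₖ (1 : Matrix I I ℂ) := by
    rw [hVdef, Matrix.conjTranspose_kronecker, Matrix.conjTranspose_one]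
  have hV : V * Vᴴ = 1 := by
    rw [hVH, hVdef, ← Matrix.mul_kronecker_mul, hUj, Matrix.one_mul, Matrix.one_kronecker_one]
  have hV' : Vᴴ * V = 1 := mul_eq_one_comm.mp hV
  have hUX' : UXᴴ * UX = 1 := mul_eq_one_comm.mp hUX
  have hXH : Xᴴ = Xjᴴ ⊗ₖ (1 : Matrix I I ℂ) := by
    rw [hX, Matrix.conjTranspose_kronecker, Matrix.conjTranspose_one]
  have hXV : Xᴴ * X = V * Matrix.diagonal (fun k : J × I => (d k.1 : ℂ)) * Vᴴ := by
    have e : Matrix.diagonal (fun k : J × I => (d k.1 : ℂ))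
        = Matrix.diagonal (fun a => (d a : ℂ)) ⊗ₖ (1 : Matrix I I ℂ) := by
      rw [← Matrix.diagonal_one, Matrix.diagonal_kronecker_diagonal]
      simp
    rw [hXH, hX, ← Matrix.mul_kronecker_mul, hXj, e, hVH, hVdef, ← Matrix.mul_kronecker_mul,
      ← Matrix.mul_kronecker_mul]
    simp
  have step1 := klein_rpow V UX (Xᴴ * X) hV hUX (fun k => d k.1)
    (Matrix.isHermitian_conjTranspose_mul_self X).eigenvalues hXV (fun k => hd0 k.1) (nn X) hq
  have step2 := klein_rpow UA V ((X + Y)ᴴ * (X + Y)) hUA hV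
    (Matrix.isHermitian_conjTranspose_mul_self (X + Y)).eigenvalues (fun k => d k.1) hA
    (nn _) (fun k => hd0 k.1) hq
  have z1 : UXᴴ * (Xᴴ * X) * UX = Matrix.diagonal
      (fun i => ((Matrix.isHermitian_conjTranspose_mul_self X).eigenvalues i : ℂ)) := by
    have : ∀ D : Matrix (J × I) (J × I) ℂ, UXᴴ * (UX * D * UXᴴ) * UX = D := by
      intro D
      calc _ = (UXᴴ * UX) * D * (UXᴴ * UX) := by simp only [Matrix.mul_assoc]
        _ = D := by rw [hUX']; simp
    exact (congrArg (fun Z => UXᴴ * Z * UX) hXX).trans (this _)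
  rw [z1] at step1
  simp only [Matrix.diagonal_apply_eq, Complex.ofReal_re, sub_self, mul_zero,
    Finset.sum_const_zero, add_zero] at step1
  refine step1.trans (le_trans ?_ step2)
  refine le_add_of_nonneg_right ?_
  have z2 : ∀ k, ((Vᴴ * (Xᴴ * X) * V) k k).re = d k.1 := by
    intro k
    have : Vᴴ * (Xᴴ * X) * V = Matrix.diagonal (fun k : J × I => (d k.1 : ℂ)) := by
      rw [hXV]
      calc _ = (Vᴴ * V) * Matrix.diagonal (fun k : J × I => (d k.1 : ℂ)) * (Vᴴ * V) := by
            simp only [Matrix.mul_assoc]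
        _ = _ := by rw [hV']; simp
    rw [this]; simp
  have hYH : ptraceRight Yᴴ = 0 := by
    ext a b
    have h := congrFun (congrFun hY b) a
    simp only [ptraceRight, Matrix.of_apply, Matrix.zero_apply] at h
    simp only [ptraceRight, Matrix.of_apply, Matrix.zero_apply, Matrix.conjTranspose_apply]
    rw [← star_sum, h, star_zero]
  have c1 : ∀ a, ∑ i, ((Vᴴ * (Xᴴ * Y) * V) (a, i) (a, i)) = 0 := by
    intro a
    have := ptrace_sum (Ujᴴ * Xjᴴ) Uj Y hY a
    rw [show (Ujᴴ * Xjᴴ) ⊗ₖ (1 : Matrix I I ℂ) = Vᴴ * Xᴴ by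
      rw [hVH, hXH, ← Matrix.mul_kronecker_mul, Matrix.one_mul]] at this
    simpa only [Matrix.mul_assoc] using this
  have c2 : ∀ a, ∑ i, ((Vᴴ * (Yᴴ * X) * V) (a, i) (a, i)) = 0 := by
    intro a
    have := ptrace_sum Ujᴴ (Xj * Uj) Yᴴ hYH a
    rw [show (Xj * Uj) ⊗ₖ (1 : Matrix I I ℂ) = X * V by
      rw [hX, hVdef, ← Matrix.mul_kronecker_mul, Matrix.one_mul], ← hVH] at this
    simpa only [Matrix.mul_assoc] using this
  have ex : ∀ k, ((Vᴴ * ((X + Y)ᴴ * (X + Y)) * V) k k).re - d k.1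
      = ((Vᴴ * (Xᴴ * Y) * V) k k).re + ((Vᴴ * (Yᴴ * X) * V) k k).re
        + ((Vᴴ * (Yᴴ * Y) * V) k k).re := by
    intro k
    rw [← z2 k]
    have : Vᴴ * ((X + Y)ᴴ * (X + Y)) * V = Vᴴ * (Xᴴ * X) * V + Vᴴ * (Xᴴ * Y) * V
        + Vᴴ * (Yᴴ * X) * V + Vᴴ * (Yᴴ * Y) * V := by
      rw [Matrix.conjTranspose_add]; noncomm_ring
    rw [this]
    simp only [Matrix.add_apply, Complex.add_re]
    ring
  rw [Fintype.sum_prod_type]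
  refine Finset.sum_nonneg fun a _ => ?_
  simp only [← Finset.mul_sum]
  refine mul_nonneg (mul_nonneg (by linarith) (Real.rpow_nonneg (hd0 a) _)) ?_
  have ex' := fun i => ex (a, i)
  simp only [ex', Finset.sum_add_distrib]
  rw [← Complex.re_sum, ← Complex.re_sum, c1, c2]
  simp only [Complex.zero_re, zero_add]
  exact Finset.sum_nonneg fun i _ => diag_conj_re_nonneg Y V (a, i)
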